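/- For every real x > 0, the limit λ(x) := lim_{k→∞} ρ(⌊4^k x⌋)/√(4^k x) exists and equals (ρ(⌊x⌋) + a(x))/√x. Moreover, for every positive integer n, λ(n) = (ρ(n) + 1)/√n. -/

import Mathlib

open Filter

/-- The partial sum `Σ_w(i, n) = w(i) + w(i+1) + ⋯ + w(i+n−1)`. -/
def pSum (w : ℕ → ℤ) (i n : ℕ) : ℤ := ∑ j ∈ Finset.range n, w (i + j)

/-- The `j`-th digit (`j ≥ 1`) of the 4-adic expansion of `x > 0` chosen with
infinitely many digits `≠ 3` (the greedy expansion):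
`x_j = ⌊4^j x⌋ − 4⌊4^(j−1) x⌋`. -/
noncomputable def digit (x : ℝ) (j : ℕ) : ℤ :=
  ⌊(4 : ℝ) ^ j * x⌋ - 4 * ⌊(4 : ℝ) ^ (j - 1) * x⌋

/-- The coefficient `d`: `d(0) = d(2) = 1`, `d(1) = 0`, `d(3) = 2`. -/
def dcoef (y : ℤ) : ℤ := if y = 0 ∨ y = 2 then 1 else if y = 1 then 0 else 2

/-- `a_j(x) = −1` if `4^j x < 1`, and `a_j(x) = ΔM(⌊4^j x⌋ − 1)` otherwise,
where `ΔM(n) = M(n+1) − M(n)`. -/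
noncomputable def acoef (M : ℕ → ℤ) (x : ℝ) (j : ℕ) : ℤ :=
  if (4 : ℝ) ^ j * x < 1 then -1
  else M (⌊(4 : ℝ) ^ j * x⌋).toNat - M ((⌊(4 : ℝ) ^ j * x⌋).toNat - 1)

/-- `a(x) = Σ_{j ≥ 1} d(x_j) a_j(x) 2^{−j}`. -/
noncomputable def afun (M : ℕ → ℤ) (x : ℝ) : ℝ :=
  ∑' j : ℕ, ((dcoef (digit x (j + 1)) * acoef M x (j + 1) : ℤ) : ℝ) / 2 ^ (j + 1)

/-!
The prefix sums `S` of `r` satisfy `S (4 m) = 2 S m` and `S (4 m + 2) = 2 S (m + 1)`, so a window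
of length `4 n` starting at an even index sums to twice a window of length `n`. Trimming or
extending a window to such an even one, and using that `M` moves by `±1` at each step, gives the
upper bounds in `M (4 n) = 2 M n + 2`, `M (4 n + 1) = 2 M n + 1`,
`M (4 n + 2) = M n + M (n + 1) + 1` and `M (4 n + 3) = 2 M (n + 1) + 1`. The `±1` steps reduce the
lower bounds to `M (4 n) ≥ 2 M n + 2` for `n ≥ 1`. If the window `p + 1, …, p + n` is maximal, then
the terms `4 p + 4, …, 4 (p + n) + 1` sum to `2 M n`, and it remains to choose the window so that
both neighbouring terms are `1`; this extra condition survives an induction on `n` in base `4`.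

For `m = ⌊4 ^ (k + 1) x⌋` the four identities say `ρ m = 2 ρ (m / 4) + d (m % 4) ΔM (m - 1)`.
Dividing by `2 ^ (k + 1)` telescopes to the partial sums of `a(x)`, and `√(4 ^ k x) = 2 ^ k √x`.
When `x` is a positive integer every digit is `0` and every `a_j` is `1`, so that `a(x) = 1`.
-/

/-- The defining recursion of the Rudin–Shapiro sequence. -/
structure IsRudinShapiro (r : ℕ → ℤ) : Prop where
  zero : r 0 = 1
  two_mul : ∀ n, r (2 * n) = r n
  two_mul_add_one : ∀ n, r (2 * n + 1) = (-1) ^ n * r n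

/-- `M n` is the largest sum of `n` consecutive terms of `w`. -/
def IsMaxSum (w M : ℕ → ℤ) : Prop :=
  ∀ n, IsGreatest (Set.range fun i => pSum w i n) (M n)

/-! ### Window sums of sign sequences -/

section SignSequences

variable {w M : ℕ → ℤ}

lemma pSum_zero (w : ℕ → ℤ) (i : ℕ) : pSum w i 0 = 0 := Finset.sum_range_zero _

lemma pSum_succ (w : ℕ → ℤ) (i n : ℕ) : pSum w i (n + 1) = pSum w i n + w (i + n) :=
  Finset.sum_range_succ _ _

lemma pSum_succ' (w : ℕ → ℤ) (i n : ℕ) : pSum w i (n + 1) = w i + pSum w (i + 1) n := by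
  simp only [pSum, Finset.sum_range_succ', add_zero, add_right_comm i 1, add_assoc, add_comm]

lemma pSum_emod_two (hw : ∀ m, w m = 1 ∨ w m = -1) (i n : ℕ) : pSum w i n % 2 = n % 2 := by
  induction n with
  | zero => simp [pSum_zero]
  | succ n ih =>
    rw [pSum_succ]
    have := hw (i + n)
    omega

namespace IsMaxSum

lemma pSum_le (hM : IsMaxSum w M) (i n : ℕ) : pSum w i n ≤ M n := (hM n).2 ⟨i, rfl⟩

lemma exists_pSum_eq (hM : IsMaxSum w M) (n : ℕ) : ∃ i, pSum w i n = M n := (hM n).1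

lemma zero (hM : IsMaxSum w M) : M 0 = 0 := by
  obtain ⟨i, hi⟩ := hM.exists_pSum_eq 0
  rw [← hi, pSum_zero]

lemma emod_two (hM : IsMaxSum w M) (hw : ∀ m, w m = 1 ∨ w m = -1) (n : ℕ) :
    M n % 2 = n % 2 := by
  obtain ⟨i, hi⟩ := hM.exists_pSum_eq n
  rw [← hi, pSum_emod_two hw]

lemma succ_le_add_one (hM : IsMaxSum w M) (hw : ∀ m, w m = 1 ∨ w m = -1) (n : ℕ) :
    M (n + 1) ≤ M n + 1 := by
  obtain ⟨i, hi⟩ := hM.exists_pSum_eq (n + 1)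
  have := hM.pSum_le i n
  have := hw (i + n)
  rw [pSum_succ] at hi
  omega

lemma le_succ_add_one (hM : IsMaxSum w M) (hw : ∀ m, w m = 1 ∨ w m = -1) (n : ℕ) :
    M n ≤ M (n + 1) + 1 := by
  obtain ⟨i, hi⟩ := hM.exists_pSum_eq n
  have hle := hM.pSum_le i (n + 1)
  have := hw (i + n)
  rw [pSum_succ] at hle
  omega

lemma succ_eq (hM : IsMaxSum w M) (hw : ∀ m, w m = 1 ∨ w m = -1) (n : ℕ) :
    M (n + 1) = M n + 1 ∨ M (n + 1) = M n - 1 := by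
  have := hM.succ_le_add_one hw n
  have := hM.le_succ_add_one hw n
  have := hM.emod_two hw n
  have := hM.emod_two hw (n + 1)
  omega

lemma one (hM : IsMaxSum w M) (hw : ∀ m, w m = 1 ∨ w m = -1) {i : ℕ} (hi : w i = 1) :
    M 1 = 1 := by
  have hle := hM.pSum_le i 1
  have hstep := hM.succ_eq hw 0
  rw [pSum_succ, pSum_zero, add_zero, hi] at hle
  rw [zero_add, hM.zero] at hstep
  omega

end IsMaxSum

end SignSequences

/-! ### Maximal window sums of the Rudin–Shapiro sequence -/

namespace IsRudinShapiro

variable {r M : ℕ → ℤ}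

lemma eq_one_or_eq_neg_one (hr : IsRudinShapiro r) (m : ℕ) : r m = 1 ∨ r m = -1 := by
  induction m using Nat.strong_induction_on with
  | _ m ih =>
    obtain ⟨k, rfl | rfl⟩ := m.even_or_odd'
    · obtain rfl | hk := k.eq_zero_or_pos
      · exact .inl hr.zero
      · rw [hr.two_mul]
        exact ih k (by omega)
    · rw [hr.two_mul_add_one]
      obtain hs | hs := neg_one_pow_eq_or ℤ k <;> obtain h | h := ih k (by omega) <;> simp [hs, h]

lemma four_mul (hr : IsRudinShapiro r) (m : ℕ) : r (4 * m) = r m := by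
  rw [show 4 * m = 2 * (2 * m) by ring, hr.two_mul, hr.two_mul]

lemma four_mul_add_one (hr : IsRudinShapiro r) (m : ℕ) : r (4 * m + 1) = r m := by
  rw [show 4 * m + 1 = 2 * (2 * m) + 1 by ring, hr.two_mul_add_one, hr.two_mul]
  simp

lemma four_mul_add_two (hr : IsRudinShapiro r) (m : ℕ) : r (4 * m + 2) = r (2 * m + 1) := by
  rw [show 4 * m + 2 = 2 * (2 * m + 1) by ring, hr.two_mul]

lemma four_mul_add_three (hr : IsRudinShapiro r) (m : ℕ) : r (4 * m + 3) = -r (2 * m + 1) := by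
  rw [show 4 * m + 3 = 2 * (2 * m + 1) + 1 by ring, hr.two_mul_add_one (2 * m + 1)]
  simp [pow_succ]

lemma eight_mul_add_one (hr : IsRudinShapiro r) (m : ℕ) : r (8 * m + 1) = r m := by
  rw [show 8 * m + 1 = 4 * (2 * m) + 1 by ring, hr.four_mul_add_one, hr.two_mul]

lemma eight_mul_add_five (hr : IsRudinShapiro r) (m : ℕ) : r (8 * m + 5) = r (2 * m + 1) := by
  rw [show 8 * m + 5 = 4 * (2 * m + 1) + 1 by ring, hr.four_mul_add_one]

lemma eight_mul_add_seven (hr : IsRudinShapiro r) (m : ℕ) : r (8 * m + 7) = r (2 * m + 1) := by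
  rw [show 8 * m + 7 = 4 * (2 * m + 1) + 3 by ring, hr.four_mul_add_three,
    show 2 * (2 * m + 1) + 1 = 4 * m + 3 by ring, hr.four_mul_add_three, neg_neg]

lemma pSum_four_mul (hr : IsRudinShapiro r) (p n : ℕ) :
    pSum r (4 * p) (4 * n) = 2 * pSum r p n := by
  induction n with
  | zero => simp [pSum_zero]
  | succ n ih =>
    simp only [Nat.mul_succ, pSum_succ, ← add_assoc, ← Nat.mul_add, ih, hr.four_mul,
      hr.four_mul_add_one, hr.four_mul_add_two, hr.four_mul_add_three]
    ring

lemma pSum_four_mul_add_two (hr : IsRudinShapiro r) (p n : ℕ) :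
    pSum r (4 * p + 2) (4 * n) = 2 * pSum r (p + 1) n := by
  have hslide : r (4 * p) + (r (4 * p + 1) + pSum r (4 * p + 2) (4 * n)) =
      pSum r (4 * p) (4 * n) + r (4 * p + 4 * n) + r (4 * p + (4 * n + 1)) := by
    rw [← pSum_succ', ← pSum_succ', ← pSum_succ, ← pSum_succ]
  have hslide' : r p + pSum r (p + 1) n = pSum r p n + r (p + n) := by
    rw [← pSum_succ', ← pSum_succ]
  rw [← add_assoc (4 * p) (4 * n) 1, ← Nat.mul_add, hr.pSum_four_mul, hr.four_mul,
    hr.four_mul, hr.four_mul_add_one, hr.four_mul_add_one] at hslide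
  linarith

lemma pSum_four_mul_add_three (hr : IsRudinShapiro r) (p n : ℕ) :
    pSum r (4 * p + 3) (4 * n) =
      2 * pSum r (p + 1) n - r (2 * p + 1) + r (2 * (p + n) + 1) := by
  have hslide : r (4 * p + 2) + pSum r (4 * p + 3) (4 * n) =
      pSum r (4 * p + 2) (4 * n) + r (4 * (p + n) + 2) := by
    rw [← pSum_succ', pSum_succ, show 4 * p + 2 + 4 * n = 4 * (p + n) + 2 by ring]
  rw [hr.pSum_four_mul_add_two, hr.four_mul_add_two, hr.four_mul_add_two] at hslide
  linarith

lemma pSum_two_mul_le (hr : IsRudinShapiro r) (hM : IsMaxSum r M) (y n : ℕ) :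
    pSum r (2 * y) (4 * n) ≤ 2 * M n := by
  obtain ⟨p, rfl | rfl⟩ := y.even_or_odd'
  · rw [show 2 * (2 * p) = 4 * p by ring, hr.pSum_four_mul]
    linarith [hM.pSum_le p n]
  · rw [show 2 * (2 * p + 1) = 4 * p + 2 by ring, hr.pSum_four_mul_add_two]
    linarith [hM.pSum_le (p + 1) n]

-- One of the two windows of length `4 n` inside a window of length `4 n + 1` starts evenly.
lemma maxSum_four_mul_add_one_le (hr : IsRudinShapiro r) (hM : IsMaxSum r M) (n : ℕ) :
    M (4 * n + 1) ≤ 2 * M n + 1 := by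
  obtain ⟨i, hi⟩ := hM.exists_pSum_eq (4 * n + 1)
  rw [← hi]
  obtain ⟨y, rfl | rfl⟩ := i.even_or_odd'
  · have := hr.pSum_two_mul_le hM y n
    have := hr.eq_one_or_eq_neg_one (2 * y + 4 * n)
    rw [pSum_succ]
    omega
  · have : pSum r (2 * y + 1 + 1) (4 * n) ≤ 2 * M n := hr.pSum_two_mul_le hM (y + 1) n
    have := hr.eq_one_or_eq_neg_one (2 * y + 1)
    rw [pSum_succ']
    omega

-- One of the two windows of length `4 n + 4` around a window of length `4 n + 3` starts evenly.
lemma maxSum_four_mul_add_three_le (hr : IsRudinShapiro r) (hM : IsMaxSum r M) (n : ℕ) :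
    M (4 * n + 3) ≤ 2 * M (n + 1) + 1 := by
  obtain ⟨i, hi⟩ := hM.exists_pSum_eq (4 * n + 3)
  rw [← hi]
  obtain ⟨y, rfl | rfl⟩ := i.even_or_odd'
  all_goals have hle : pSum r (2 * y) (4 * n + 3 + 1) ≤ 2 * M (n + 1) :=
    hr.pSum_two_mul_le hM y (n + 1)
  · have := hr.eq_one_or_eq_neg_one (2 * y + (4 * n + 3))
    rw [pSum_succ] at hle
    omega
  · have := hr.eq_one_or_eq_neg_one (2 * y)
    rw [pSum_succ'] at hle
    omega

lemma maxSum_four_mul_add_two_le (hr : IsRudinShapiro r) (hM : IsMaxSum r M) (n : ℕ) :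
    M (4 * n + 2) ≤ M n + M (n + 1) + 1 := by
  have := hr.maxSum_four_mul_add_one_le hM n
  have := hr.maxSum_four_mul_add_three_le hM n
  have : M (4 * n + 2) ≤ M (4 * n + 1) + 1 := hM.succ_le_add_one hr.eq_one_or_eq_neg_one _
  have : M (4 * n + 2) ≤ M (4 * n + 3) + 1 := hM.le_succ_add_one hr.eq_one_or_eq_neg_one _
  have := hM.succ_eq hr.eq_one_or_eq_neg_one n
  omega

lemma maxSum_four_mul_le (hr : IsRudinShapiro r) (hM : IsMaxSum r M) (n : ℕ) :
    M (4 * n) ≤ 2 * M n + 2 := by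
  have := hr.maxSum_four_mul_add_one_le hM n
  have := hM.le_succ_add_one hr.eq_one_or_eq_neg_one (4 * n)
  omega

end IsRudinShapiro

/-- The window `p + 1, …, p + n` of `r` has maximal sum, and the terms `r (4 p + 3)` and
`r (4 (p + n) + 2)` are both `1`, so that adjoining them to `4 p + 4, …, 4 (p + n) + 1` gives a
window of length `4 n` and sum `2 M n + 2`. The last two conditions are written in terms of
`r (2 m + 1) = r (4 m + 2) = -r (4 m + 3)`. -/
structure IsFlankedMax (r M : ℕ → ℤ) (n p : ℕ) : Prop where
  pSum_eq : pSum r (p + 1) n = M n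
  left : r (2 * p + 1) = -1
  right : r (2 * (p + n) + 1) = 1

namespace IsFlankedMax

variable {r M : ℕ → ℤ} {n p : ℕ}

lemma pSum_four_mul_add_three (h : IsFlankedMax r M n p) (hr : IsRudinShapiro r) :
    pSum r (4 * p + 3) (4 * n) = 2 * M n + 2 := by
  rw [hr.pSum_four_mul_add_three, h.pSum_eq, h.left, h.right]
  ring

lemma four_mul (h : IsFlankedMax r M n p) (hr : IsRudinShapiro r) (hM : IsMaxSum r M) :
    IsFlankedMax r M (4 * n) (4 * p + 2) where
  pSum_eq := le_antisymm (hM.pSum_le _ _) <|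
    (hr.maxSum_four_mul_le hM n).trans_eq (h.pSum_four_mul_add_three hr).symm
  left := by rw [show 2 * (4 * p + 2) + 1 = 8 * p + 5 by ring, hr.eight_mul_add_five, h.left]
  right := by
    rw [show 2 * (4 * p + 2 + 4 * n) + 1 = 8 * (p + n) + 5 by ring, hr.eight_mul_add_five, h.right]

lemma four_mul_add_one (h : IsFlankedMax r M n p) (hr : IsRudinShapiro r) (hM : IsMaxSum r M) :
    IsFlankedMax r M (4 * n + 1) (4 * p + 2) where
  pSum_eq := by
    refine le_antisymm (hM.pSum_le _ _) ?_
    rw [pSum_succ, h.pSum_four_mul_add_three hr,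
      show 4 * p + 2 + 1 + 4 * n = 4 * (p + n) + 3 by ring, hr.four_mul_add_three, h.right]
    linarith [hr.maxSum_four_mul_add_one_le hM n]
  left := by rw [show 2 * (4 * p + 2) + 1 = 8 * p + 5 by ring, hr.eight_mul_add_five, h.left]
  right := by
    rw [show 2 * (4 * p + 2 + (4 * n + 1)) + 1 = 8 * (p + n) + 7 by ring,
      hr.eight_mul_add_seven, h.right]

lemma four_mul_add_two_of_lt (h : IsFlankedMax r M (n + 1) p) (hr : IsRudinShapiro r)
    (hM : IsMaxSum r M) (hlt : M n < M (n + 1)) :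
    IsFlankedMax r M (4 * n + 2) (4 * p + 2) := by
  have hlast : r (p + n + 1) = 1 := by
    have hsum := h.pSum_eq
    rw [pSum_succ, add_right_comm] at hsum
    have := hM.pSum_le (p + 1) n
    have := hr.eq_one_or_eq_neg_one (p + n + 1)
    omega
  refine ⟨le_antisymm (hM.pSum_le _ _) ?_, ?_, ?_⟩
  · have hsum : pSum r (4 * p + 3) (4 * n + 2 + 1 + 1) = 2 * M (n + 1) + 2 :=
      h.pSum_four_mul_add_three hr
    have hright : r (4 * (p + n + 1) + 2) = 1 := (hr.four_mul_add_two _).trans h.right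
    rw [pSum_succ, pSum_succ, show 4 * p + 3 + (4 * n + 2) = 4 * (p + n + 1) + 1 by ring,
      show 4 * p + 3 + (4 * n + 2 + 1) = 4 * (p + n + 1) + 2 by ring, hr.four_mul_add_one,
      hlast, hright] at hsum
    linarith [hr.maxSum_four_mul_add_two_le hM n]
  · rw [show 2 * (4 * p + 2) + 1 = 8 * p + 5 by ring, hr.eight_mul_add_five, h.left]
  · rw [show 2 * (4 * p + 2 + (4 * n + 2)) + 1 = 8 * (p + n + 1) + 1 by ring,
      hr.eight_mul_add_one, hlast]

lemma four_mul_add_two_of_gt (h : IsFlankedMax r M n p) (hr : IsRudinShapiro r)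
    (hM : IsMaxSum r M) (hgt : M (n + 1) < M n) : IsFlankedMax r M (4 * n + 2) (4 * p) := by
  have hfirst : r p = -1 := by
    have hle := hM.pSum_le p (n + 1)
    rw [pSum_succ', h.pSum_eq] at hle
    have := hr.eq_one_or_eq_neg_one p
    omega
  refine ⟨le_antisymm (hM.pSum_le _ _) ?_, ?_, ?_⟩
  · rw [pSum_succ', pSum_succ', h.pSum_four_mul_add_three hr, hr.four_mul_add_one, hfirst,
      hr.four_mul_add_two, h.left]
    linarith [hr.maxSum_four_mul_add_two_le hM n]
  · rw [show 2 * (4 * p) + 1 = 8 * p + 1 by ring, hr.eight_mul_add_one, hfirst]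
  · rw [show 2 * (4 * p + (4 * n + 2)) + 1 = 8 * (p + n) + 5 by ring,
      hr.eight_mul_add_five, h.right]

lemma four_mul_add_three (h : IsFlankedMax r M (n + 1) p) (hr : IsRudinShapiro r)
    (hM : IsMaxSum r M) : IsFlankedMax r M (4 * n + 3) (4 * p + 3) where
  pSum_eq := by
    refine le_antisymm (hM.pSum_le _ _) ?_
    have hsum : pSum r (4 * p + 3) (4 * n + 3 + 1) = 2 * M (n + 1) + 2 :=
      h.pSum_four_mul_add_three hr
    rw [pSum_succ', hr.four_mul_add_three, h.left] at hsum
    linarith [hr.maxSum_four_mul_add_three_le hM n]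
  left := by rw [show 2 * (4 * p + 3) + 1 = 8 * p + 7 by ring, hr.eight_mul_add_seven, h.left]
  right := by
    rw [show 2 * (4 * p + 3 + (4 * n + 3)) + 1 = 8 * (p + (n + 1)) + 5 by ring,
      hr.eight_mul_add_five, h.right]

end IsFlankedMax

namespace IsRudinShapiro

variable {r M : ℕ → ℤ}

lemma maxSum_one (hr : IsRudinShapiro r) (hM : IsMaxSum r M) : M 1 = 1 :=
  hM.one hr.eq_one_or_eq_neg_one hr.zero

lemma isFlankedMax_one (hr : IsRudinShapiro r) (hM : IsMaxSum r M) : IsFlankedMax r M 1 1 := by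
  have h1 : r 1 = 1 := (hr.four_mul_add_one 0).trans hr.zero
  refine ⟨?_, ?_, ?_⟩
  · rw [pSum_succ, pSum_zero, hr.maxSum_one hM, zero_add, ← h1]
    exact hr.two_mul 1
  · rw [← h1]
    exact hr.four_mul_add_three 0
  · rw [← h1]
    exact hr.four_mul_add_one 1

lemma exists_isFlankedMax (hr : IsRudinShapiro r) (hM : IsMaxSum r M) {N : ℕ} (hN : 1 ≤ N) :
    ∃ p, IsFlankedMax r M N p := by
  induction N using Nat.strong_induction_on with
  | _ N ih =>
    obtain rfl | hN1 := hN.eq_or_lt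
    · exact ⟨1, hr.isFlankedMax_one hM⟩
    obtain ⟨n, rfl | rfl | rfl | rfl⟩ :
        ∃ n, N = 4 * n ∨ N = 4 * n + 1 ∨ N = 4 * n + 2 ∨ N = 4 * n + 3 := ⟨N / 4, by omega⟩
    · obtain ⟨p, hp⟩ := ih n (by omega) (by omega)
      exact ⟨_, hp.four_mul hr hM⟩
    · obtain ⟨p, hp⟩ := ih n (by omega) (by omega)
      exact ⟨_, hp.four_mul_add_one hr hM⟩
    · obtain hinc | hdec := hM.succ_eq hr.eq_one_or_eq_neg_one n
      · obtain ⟨p, hp⟩ := ih (n + 1) (by omega) (by omega)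
        exact ⟨_, hp.four_mul_add_two_of_lt hr hM (by omega)⟩
      · have hn : n ≠ 0 := by
          rintro rfl
          rw [zero_add, hr.maxSum_one hM, hM.zero] at hdec
          omega
        obtain ⟨p, hp⟩ := ih n (by omega) (by omega)
        exact ⟨_, hp.four_mul_add_two_of_gt hr hM (by omega)⟩
    · obtain ⟨p, hp⟩ := ih (n + 1) (by omega) (by omega)
      exact ⟨_, hp.four_mul_add_three hr hM⟩

lemma maxSum_four_mul (hr : IsRudinShapiro r) (hM : IsMaxSum r M) {n : ℕ} (hn : 1 ≤ n) :
    M (4 * n) = 2 * M n + 2 := by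
  obtain ⟨p, hp⟩ := hr.exists_isFlankedMax hM hn
  exact (hr.maxSum_four_mul_le hM n).antisymm <|
    (hp.pSum_four_mul_add_three hr).symm.trans_le (hM.pSum_le _ _)

lemma maxSum_four_mul_add_one (hr : IsRudinShapiro r) (hM : IsMaxSum r M) (n : ℕ) :
    M (4 * n + 1) = 2 * M n + 1 := by
  obtain rfl | hn := n.eq_zero_or_pos
  · simp [hr.maxSum_one hM, hM.zero]
  · have := hr.maxSum_four_mul hM hn
    have := hr.maxSum_four_mul_add_one_le hM n
    have := hM.le_succ_add_one hr.eq_one_or_eq_neg_one (4 * n)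
    omega

lemma maxSum_four_mul_add_three (hr : IsRudinShapiro r) (hM : IsMaxSum r M) (n : ℕ) :
    M (4 * n + 3) = 2 * M (n + 1) + 1 := by
  have : M (4 * n + 3 + 1) = 2 * M (n + 1) + 2 := hr.maxSum_four_mul hM n.succ_pos
  have := hr.maxSum_four_mul_add_three_le hM n
  have := hM.succ_le_add_one hr.eq_one_or_eq_neg_one (4 * n + 3)
  omega

lemma maxSum_four_mul_add_two (hr : IsRudinShapiro r) (hM : IsMaxSum r M) (n : ℕ) :
    M (4 * n + 2) = M n + M (n + 1) + 1 := by
  have := hr.maxSum_four_mul_add_one hM n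
  have := hr.maxSum_four_mul_add_three hM n
  have := hr.maxSum_four_mul_add_two_le hM n
  have : M (4 * n + 1) ≤ M (4 * n + 2) + 1 := hM.le_succ_add_one hr.eq_one_or_eq_neg_one _
  have : M (4 * n + 3) ≤ M (4 * n + 2) + 1 := hM.succ_le_add_one hr.eq_one_or_eq_neg_one _
  have := hM.succ_eq hr.eq_one_or_eq_neg_one n
  omega

end IsRudinShapiro

/-! ### Digits and the limit -/

/-- The backward difference `ΔM (m - 1)`, given the value `-1` at `m = 0`; it expresses the
coefficients `a_j` in terms of the integer `⌊4 ^ j * x⌋`. -/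
def backwardDiff (M : ℕ → ℤ) (m : ℕ) : ℤ := if m = 0 then -1 else M m - M (m - 1)

lemma backwardDiff_succ (M : ℕ → ℤ) (m : ℕ) : backwardDiff M (m + 1) = M (m + 1) - M m := rfl

lemma abs_dcoef_le (y : ℤ) : |dcoef y| ≤ 2 := by
  unfold dcoef
  split_ifs <;> norm_num

lemma abs_backwardDiff_le {w M : ℕ → ℤ} (hM : IsMaxSum w M) (hw : ∀ m, w m = 1 ∨ w m = -1)
    (m : ℕ) : |backwardDiff M m| ≤ 1 := by
  cases m with
  | zero => simp [backwardDiff]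
  | succ m => obtain h | h := hM.succ_eq hw m <;> simp [backwardDiff_succ, h]

lemma acoef_eq_backwardDiff (M : ℕ → ℤ) (x : ℝ) (j : ℕ) :
    acoef M x j = backwardDiff M ⌊(4 : ℝ) ^ j * x⌋₊ := by
  simp only [acoef, backwardDiff, Int.floor_toNat, Nat.floor_eq_zero]

lemma floor_four_pow_succ_mul_div (x : ℝ) (k : ℕ) :
    ⌊(4 : ℝ) ^ (k + 1) * x⌋ / 4 = ⌊(4 : ℝ) ^ k * x⌋ := by
  have := Int.mul_natCast_floor_div_cancel four_ne_zero ((4 : ℝ) ^ k * x)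
  rwa [Nat.cast_ofNat, Nat.cast_ofNat, mul_right_comm, ← pow_succ] at this

lemma digit_succ (x : ℝ) (k : ℕ) : digit x (k + 1) = ⌊(4 : ℝ) ^ (k + 1) * x⌋ % 4 := by
  rw [Int.emod_def, floor_four_pow_succ_mul_div, digit, Nat.add_sub_cancel]

lemma IsRudinShapiro.backwardDiff_four_mul {r M : ℕ → ℤ} (hr : IsRudinShapiro r)
    (hM : IsMaxSum r M) {m : ℕ} (hm : 1 ≤ m) : backwardDiff M (4 * m) = 1 := by
  obtain ⟨n, rfl⟩ := Nat.exists_eq_add_of_le' hm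
  have h3 := hr.maxSum_four_mul_add_three hM n
  have h4 : M (4 * n + 3 + 1) = 2 * M (n + 1) + 2 := hr.maxSum_four_mul hM hm
  rw [Nat.mul_succ, backwardDiff_succ, h3, h4]
  ring

lemma IsRudinShapiro.maxSum_add_one_eq {r M : ℕ → ℤ} (hr : IsRudinShapiro r)
    (hM : IsMaxSum r M) (m : ℕ) :
    M m + 1 = 2 * (M (m / 4) + 1) + dcoef (m % 4 : ℕ) * backwardDiff M m := by
  obtain ⟨n, b, hb, rfl⟩ : ∃ n b, b < 4 ∧ m = 4 * n + b := ⟨m / 4, m % 4, by omega, by omega⟩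
  rw [show (4 * n + b) / 4 = n by omega, show (4 * n + b) % 4 = b by omega]
  have h1 := hr.maxSum_four_mul_add_one hM n
  have h2 := hr.maxSum_four_mul_add_two hM n
  have h3 := hr.maxSum_four_mul_add_three hM n
  interval_cases b
  · rw [show dcoef (0 : ℕ) = 1 from rfl, add_zero]
    obtain rfl | hn := n.eq_zero_or_pos
    · simp [hM.zero, backwardDiff]
    · rw [hr.backwardDiff_four_mul hM hn, hr.maxSum_four_mul hM hn]
      ring
  · rw [show dcoef (1 : ℕ) = 0 from rfl, h1]
    ring
  · rw [show dcoef (2 : ℕ) = 1 from rfl, backwardDiff_succ, h1, h2]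
    ring
  · rw [show dcoef (3 : ℕ) = 2 from rfl, backwardDiff_succ, h2, h3]
    ring

lemma tendsto_div_pow_of_affine_recurrence {𝕜 : Type*} [NormedField 𝕜] [CompleteSpace 𝕜]
    {b : 𝕜} (hb : 1 < ‖b‖) {u c : ℕ → 𝕜} {C : ℝ} (hu : ∀ k, u (k + 1) = b * u k + c k)
    (hc : ∀ k, ‖c k‖ ≤ C) :
    Tendsto (fun k => u k / b ^ k) atTop (nhds (u 0 + ∑' k, c k / b ^ (k + 1))) := by
  have hb0 : b ≠ 0 := norm_pos_iff.1 (one_pos.trans hb)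
  have hpartial (k : ℕ) : u 0 + ∑ j ∈ Finset.range k, c j / b ^ (j + 1) = u k / b ^ k := by
    induction k with
    | zero => simp
    | succ k ih =>
      rw [Finset.sum_range_succ, ← add_assoc, ih, hu]
      field_simp
      ring
  have hsummable : Summable fun k => c k / b ^ (k + 1) := by
    refine Summable.of_norm_bounded (g := fun k => C * ‖b‖⁻¹ ^ (k + 1)) ?_ fun k => ?_
    · exact ((summable_nat_add_iff 1).2 <| summable_geometric_of_lt_one (by positivity)
        (inv_lt_one_of_one_lt₀ hb)).mul_left C
    · rw [norm_div, norm_pow, div_eq_mul_inv, inv_pow]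
      gcongr
      exact hc k
  exact (hsummable.hasSum.tendsto_sum_nat.const_add (u 0)).congr hpartial

namespace IsRudinShapiro

variable {r M : ℕ → ℤ}

lemma maxSum_floor_succ (hr : IsRudinShapiro r) (hM : IsMaxSum r M) {x : ℝ} (hx : 0 ≤ x)
    (k : ℕ) :
    M ⌊(4 : ℝ) ^ (k + 1) * x⌋₊ + 1 = 2 * (M ⌊(4 : ℝ) ^ k * x⌋₊ + 1) +
      dcoef (digit x (k + 1)) * acoef M x (k + 1) := by
  have hcast (j : ℕ) : ⌊(4 : ℝ) ^ j * x⌋ = (⌊(4 : ℝ) ^ j * x⌋₊ : ℤ) :=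
    (Int.natCast_floor_eq_floor (by positivity)).symm
  have hdiv : ⌊(4 : ℝ) ^ (k + 1) * x⌋₊ / 4 = ⌊(4 : ℝ) ^ k * x⌋₊ := by
    have := floor_four_pow_succ_mul_div x k
    rw [hcast, hcast] at this
    exact_mod_cast this
  have hdigit : digit x (k + 1) = (⌊(4 : ℝ) ^ (k + 1) * x⌋₊ % 4 : ℕ) := by
    rw [digit_succ, hcast]
    norm_cast
  rw [hr.maxSum_add_one_eq hM, hdiv, hdigit, acoef_eq_backwardDiff]

lemma tendsto_maxSum_floor_div_two_pow (hr : IsRudinShapiro r) (hM : IsMaxSum r M) {x : ℝ}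
    (hx : 0 ≤ x) :
    Tendsto (fun k : ℕ => ((M ⌊(4 : ℝ) ^ k * x⌋₊ + 1 : ℤ) : ℝ) / 2 ^ k) atTop
      (nhds ((M ⌊x⌋₊ + 1 : ℤ) + afun M x)) := by
  have hbound (k : ℕ) :
      ‖((dcoef (digit x (k + 1)) * acoef M x (k + 1) : ℤ) : ℝ)‖ ≤ 2 * 1 := by
    rw [acoef_eq_backwardDiff, Int.cast_mul, norm_mul, Real.norm_eq_abs, Real.norm_eq_abs]
    gcongr
    · exact_mod_cast abs_dcoef_le _
    · exact_mod_cast abs_backwardDiff_le hM hr.eq_one_or_eq_neg_one _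
  have hlim := tendsto_div_pow_of_affine_recurrence (b := (2 : ℝ)) (by norm_num)
    (u := fun k => ((M ⌊(4 : ℝ) ^ k * x⌋₊ + 1 : ℤ) : ℝ))
    (fun k => by exact_mod_cast hr.maxSum_floor_succ hM hx k) hbound
  simpa only [pow_zero, one_mul, afun] using hlim

lemma afun_natCast (hr : IsRudinShapiro r) (hM : IsMaxSum r M) {n : ℕ} (hn : 1 ≤ n) :
    afun M n = 1 := by
  have hterm (j : ℕ) : dcoef (digit n (j + 1)) * acoef M n (j + 1) = 1 := by
    have hpow : (4 : ℝ) ^ (j + 1) * n = (4 * (4 ^ j * n) : ℕ) := by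
      push_cast
      ring
    have hdigit : digit n (j + 1) = 0 := by
      rw [digit_succ, hpow, Int.floor_natCast]
      omega
    rw [hdigit, acoef_eq_backwardDiff, hpow, Nat.floor_natCast,
      hr.backwardDiff_four_mul hM (Nat.mul_pos (by positivity) hn)]
    rfl
  simp only [afun, hterm, Int.cast_one, pow_succ']
  simpa only [div_div] using tsum_geometric_two' 1

end IsRudinShapiro

lemma sqrt_four_pow_mul (k : ℕ) (x : ℝ) : √((4 : ℝ) ^ k * x) = 2 ^ k * √x := by
  rw [Real.sqrt_mul (by positivity), show (4 : ℝ) ^ k = (2 ^ k) ^ 2 by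
    rw [pow_right_comm]; norm_num, Real.sqrt_sq (by positivity)]

/-- For every real `x > 0` the limit
`λ(x) = lim_k ρ(⌊4^k x⌋)/√(4^k x)` exists and equals `(ρ(⌊x⌋) + a(x))/√x`,
where `ρ(n) = M(n) + 1`. Moreover, for every positive integer `n`,
`λ(n) = (ρ(n) + 1)/√n`. -/
theorem tendsto_rho_div_sqrt
    (r : ℕ → ℤ) (hr0 : r 0 = 1)
    (hre : ∀ n, r (2 * n) = r n)
    (hro : ∀ n, r (2 * n + 1) = (-1) ^ n * r n)
    (M : ℕ → ℤ)
    (hM : ∀ n, IsGreatest (Set.range fun i => pSum r i n) (M n))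
    (ρ : ℕ → ℤ) (hρ : ∀ n, ρ n = M n + 1) :
    (∀ x : ℝ, 0 < x →
      Tendsto
        (fun k : ℕ => ((ρ (⌊(4 : ℝ) ^ k * x⌋).toNat : ℤ) : ℝ) / Real.sqrt ((4 : ℝ) ^ k * x))
        atTop
        (nhds ((((ρ (⌊x⌋).toNat : ℤ) : ℝ) + afun M x) / Real.sqrt x))) ∧
    (∀ n : ℕ, 1 ≤ n →
      Tendsto
        (fun k : ℕ => ((ρ (4 ^ k * n) : ℤ) : ℝ) / Real.sqrt ((4 : ℝ) ^ k * (n : ℝ)))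
        atTop
        (nhds ((((ρ n : ℤ) : ℝ) + 1) / Real.sqrt (n : ℝ)))) := by
  have hr : IsRudinShapiro r := ⟨hr0, hre, hro⟩
  have hlim (x : ℝ) (hx : 0 < x) : Tendsto
      (fun k : ℕ => (ρ ⌊(4 : ℝ) ^ k * x⌋.toNat : ℝ) / √((4 : ℝ) ^ k * x)) atTop
      (nhds ((ρ ⌊x⌋.toNat + afun M x) / √x)) := by
    simpa only [hρ, Int.floor_toNat, sqrt_four_pow_mul, div_div] using
      (hr.tendsto_maxSum_floor_div_two_pow hM hx.le).div_const √x
  refine ⟨hlim, fun n hn => ?_⟩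
  have hfloor (k : ℕ) : ⌊(4 : ℝ) ^ k * n⌋.toNat = 4 ^ k * n := by
    rw [Int.floor_toNat]
    exact_mod_cast Nat.floor_natCast (R := ℝ) (4 ^ k * n)
  simpa only [hfloor, Int.floor_natCast, Int.toNat_natCast, hr.afun_natCast hM hn] using
    hlim n (by positivity)
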